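/- Let H be a complex Hilbert space and let E, F be effects on H. If the four Jordan products E ∘ F, (1−E) ∘ F, E ∘ (1−F), and (1−E) ∘ (1−F) are all positive operators, then E ⊓ F ≥ 0, (1−E) ⊓ F ≥ 0, E ⊓ (1−F) ≥ 0, and (1−E) ⊓ (1−F) ≥ 0, where ⊓ denotes the generalized infimum. -/

import Mathlib

variable {H : Type*} [NormedAddCommGroup H] [InnerProductSpace ℂ H] [CompleteSpace H]

/-- An effect on a complex Hilbert space: an operator `E` with `0 ≤ E ≤ 1` in the Loewner order. -/
def IsEffect (E : H →L[ℂ] H) : Prop := 0 ≤ E ∧ E ≤ 1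


/-- The Jordan product E ∘ F = ½(EF + FE). -/
noncomputable def jordan (E F : H →L[ℂ] H) : H →L[ℂ] H := (2 : ℂ)⁻¹ • (E * F + F * E)


/-- The absolute value |A| of a selfadjoint operator: the positive square root of A². -/
noncomputable def opAbs (A : H →L[ℂ] H) : H →L[ℂ] H := CFC.sqrt (A ^ 2)

/-- The generalized infimum E ⊓ F = ½(E + F - |E - F|). -/
noncomputable def ginf (E F : H →L[ℂ] H) : H →L[ℂ] H := (2 : ℂ)⁻¹ • (E + F - opAbs (E - F))

/-- If the Jordan product of two positive operators is positive, so is their generalized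
infimum: `(A - B)² ≤ (A + B)²`, and the square root is operator monotone. -/
theorem ginf_nonneg_of_jordan_nonneg {A B : H →L[ℂ] H} (hA : 0 ≤ A) (hB : 0 ≤ B)
    (h : 0 ≤ jordan A B) : 0 ≤ ginf A B := by
  have hsq : (A - B) ^ 2 ≤ (A + B) ^ 2 := by
    have hdiff : (A + B) ^ 2 - (A - B) ^ 2 = (4 : ℝ) • jordan A B := by
      have hdouble : (A + B) ^ 2 - (A - B) ^ 2 = (2 : ℂ) • (A * B + B * A) := by
        rw [two_smul]
        noncomm_ring
      rw [hdouble, jordan, ← Complex.coe_smul, smul_smul]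
      norm_num
    rw [← sub_nonneg, hdiff]
    exact smul_nonneg (by norm_num) h
  have habs : opAbs (A - B) ≤ A + B := by
    have := CFC.sqrt_le_sqrt _ _ hsq
    rwa [CFC.sqrt_sq (A + B) (add_nonneg hA hB)] at this
  have hhalf : ginf A B = (2 : ℝ)⁻¹ • (A + B - opAbs (A - B)) := by
    rw [ginf, ← Complex.coe_smul]
    norm_num
  rw [hhalf]
  exact smul_nonneg (by norm_num) (sub_nonneg.mpr habs)

/-- (JOR) implies (GINF): positivity of all four Jordan products gives positivity of all four
generalized infima. -/
theorem ginf_nonneg_of_jordan_nonneg' (E F : H →L[ℂ] H) (hE : IsEffect E) (hF : IsEffect F)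
    (h₁ : 0 ≤ jordan E F) (h₂ : 0 ≤ jordan (1 - E) F)
    (h₃ : 0 ≤ jordan E (1 - F)) (h₄ : 0 ≤ jordan (1 - E) (1 - F)) :
    0 ≤ ginf E F ∧ 0 ≤ ginf (1 - E) F ∧ 0 ≤ ginf E (1 - F) ∧
      0 ≤ ginf (1 - E) (1 - F) := by
  have hE' := sub_nonneg.mpr hE.2
  have hF' := sub_nonneg.mpr hF.2
  exact ⟨ginf_nonneg_of_jordan_nonneg hE.1 hF.1 h₁, ginf_nonneg_of_jordan_nonneg hE' hF.1 h₂,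
    ginf_nonneg_of_jordan_nonneg hE.1 hF' h₃, ginf_nonneg_of_jordan_nonneg hE' hF' h₄⟩
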